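/- Complemented elements are sub-products: Let G be a tower group and let N be a normal subgroup of G. If there exists a normal subgroup C of G with N ⊓ C = ⊥ and N ⊔ C = ⊤, then N is a full sub-product of factors: there exists a set T ⊆ ι such that N = ⨆_{j ∈ T} F_j. -/

import Mathlib

/-!
Write `G` for the tower group and `C` for a normal complement of `N`. As `N` and `C` are normal with
trivial intersection, they commute elementwise, so their projections to a coordinate `j = (k, i)`
are commuting normal subgroups of `S_k` that together generate `S_k`. Since `k ≥ 3`, one of the two
projections is trivial (`eq_bot_or_eq_bot_of_commuting_normal`): `S_k` is directly indecomposable.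

Let `T` be the set of coordinates at which `C` projects trivially; at every coordinate outside `T`,
`N` projects trivially. Then `N` consists exactly of the tuples `g` that are trivial outside `T`:
writing such a `g` as `n * c` with `n ∈ N` and `c ∈ C`, the element `c` is trivial at each
coordinate in `T` by definition, and at each other coordinate because `g` and `n` are, so `c = 1`.
The tuples trivial outside `T` form the product of the factors `F_j`, `j ∈ T`, because only
finitely many coordinates exist.
-/

/-- The monoid embedding of `S_k` into the tower group at slot `j = (k, i)`. -/
def towerEmb (a : ℕ → ℕ) (j : Σ k : ℕ, Fin (a k)) :
    Equiv.Perm (Fin j.1) →* Π k : ℕ, Π _i : Fin (a k), Equiv.Perm (Fin k) :=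
  (MonoidHom.mulSingle (fun k => Π _i : Fin (a k), Equiv.Perm (Fin k)) j.1).comp
    (MonoidHom.mulSingle (fun _ : Fin (a j.1) => Equiv.Perm (Fin j.1)) j.2)

/-- The factor `F_j = S_k^{(k,i)}` as a subgroup of the tower group. -/
def towerFactor (a : ℕ → ℕ) (j : Σ k : ℕ, Fin (a k)) :
    Subgroup (Π k : ℕ, Π _i : Fin (a k), Equiv.Perm (Fin k)) :=
  (towerEmb a j).range

/-- If a normal subgroup `A ≠ ⊥` of a symmetric group commutes with `b`, then `b` has no fixed
point unless `b = 1`: conjugates of a nontrivial element of `A` carry a fixed point `p` of `b` to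
any other point `q`, which is then fixed by `b` too. -/
theorem eq_one_of_commuting_of_fixed {α : Type*} [DecidableEq α] {A : Subgroup (Equiv.Perm α)}
    (hA : A.Normal) (hne : A ≠ ⊥) {b : Equiv.Perm α} (hcomm : ∀ a ∈ A, Commute a b)
    {p : α} (hp : b p = p) : b = 1 := by
  obtain ⟨a, haA, ha⟩ := A.bot_or_exists_ne_one.resolve_left hne
  obtain ⟨u, hu⟩ : ∃ u, a u ≠ u := by
    by_contra! h
    exact ha (Equiv.ext h)
  ext q
  rcases eq_or_ne q p with rfl | hqp
  · exact hp
  -- A permutation `g` with `g u = p` and `g (a u) = q`.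
  obtain ⟨g, hgu, hgv⟩ : ∃ g : Equiv.Perm α, g u = p ∧ g (a u) = q := by
    refine ⟨Equiv.swap (Equiv.swap u p (a u)) q * Equiv.swap u p, ?_, ?_⟩
    · rw [Equiv.Perm.mul_apply, Equiv.swap_apply_left]
      refine Equiv.swap_apply_of_ne_of_ne (fun h => hu ?_) hqp.symm
      apply (Equiv.swap u p).injective
      rw [← h, Equiv.swap_apply_left]
    · rw [Equiv.Perm.mul_apply, Equiv.swap_apply_left]
  have hg : (g * a * g⁻¹) p = q := by
    rw [Equiv.Perm.mul_apply, Equiv.Perm.mul_apply, ← hgu, Equiv.Perm.inv_def, Equiv.symm_apply_apply, hgv]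
  have h := congrArg (fun s : Equiv.Perm α => s p) (hcomm _ (hA.conj_mem _ haA g)).eq
  simp only [Equiv.Perm.mul_apply b, Equiv.Perm.mul_apply _ b, hp, hg] at h
  exact h.symm

/-- Two commuting normal subgroups that generate a symmetric group on at least three points cannot
both be nontrivial. If they were, neither would have a nontrivial element with a fixed point. Write
a transposition `(x y)` as `a * b` with `a ∈ A`, `b ∈ B`. Neither factor is trivial, as `(x y)`
fixes a third point. Both commute with `(x y)`, so both preserve `{x, y}` and hence interchange `x`
and `y`; but then `a * b` fixes `x`. -/
theorem eq_bot_or_eq_bot_of_commuting_normal {α : Type*} [DecidableEq α]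
    {A B : Subgroup (Equiv.Perm α)} (hA : A.Normal) (hB : B.Normal)
    (hcomm : ∀ a ∈ A, ∀ b ∈ B, Commute a b) (hsup : ∀ t, ∃ a ∈ A, ∃ b ∈ B, a * b = t)
    {x y w : α} (hxy : x ≠ y) (hwx : w ≠ x) (hwy : w ≠ y) : A = ⊥ ∨ B = ⊥ := by
  by_contra! hne
  obtain ⟨hneA, hneB⟩ := hne
  have fixA : ∀ a ∈ A, ∀ p, a p = p → a = 1 := fun a ha p hp =>
    eq_one_of_commuting_of_fixed hB hneB (fun b hb => (hcomm a ha b hb).symm) hp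
  have fixB : ∀ b ∈ B, ∀ p, b p = p → b = 1 := fun b hb p hp =>
    eq_one_of_commuting_of_fixed hA hneA (fun a ha => hcomm a ha b hb) hp
  obtain ⟨a, ha, b, hb, hab⟩ := hsup (Equiv.swap x y)
  have hw : Equiv.swap x y w = w := Equiv.swap_apply_of_ne_of_ne hwx hwy
  have hs1 : Equiv.swap x y ≠ 1 := fun h => hxy (Equiv.swap_eq_one_iff.mp h)
  have ha1 : a ≠ 1 := by
    rintro rfl
    rw [one_mul] at hab
    exact hs1 (hab ▸ fixB b hb w (hab ▸ hw))
  have hb1 : b ≠ 1 := by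
    rintro rfl
    rw [mul_one] at hab
    exact hs1 (hab ▸ fixA a ha w (hab ▸ hw))
  -- A fixed-point-free permutation commuting with `(x y)` maps `x` to `y`, and `y` to `x`.
  have key : ∀ c : Equiv.Perm α, Commute c (Equiv.swap x y) → (∀ p, c p ≠ p) →
      c x = y ∧ c y = x := by
    intro c hc hfix
    have h1 : c y = Equiv.swap x y (c x) := by
      simpa using congrArg (fun s : Equiv.Perm α => s x) hc.eq
    have h2 : c x = y := by
      by_contra hcx
      rw [Equiv.swap_apply_of_ne_of_ne (hfix x) hcx] at h1
      exact hxy (c.injective h1).symm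
    exact ⟨h2, by rw [h1, h2, Equiv.swap_apply_right]⟩
  have hc := hcomm a ha b hb
  have ka := key a (hab ▸ (Commute.refl a).mul_right hc) fun p hp => ha1 (fixA a ha p hp)
  have kb := key b (hab ▸ hc.symm.mul_right (Commute.refl b)) fun p hp => hb1 (fixB b hb p hp)
  have h := congrArg (fun s : Equiv.Perm α => s x) hab
  simp only [Equiv.Perm.mul_apply, kb.1, ka.2, Equiv.swap_apply_left] at h
  exact hxy h

/-- The projection of the tower group to its coordinate `j`. -/
def towerProj (a : ℕ → ℕ) (j : Σ k : ℕ, Fin (a k)) :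
    (Π k : ℕ, Π _i : Fin (a k), Equiv.Perm (Fin k)) →* Equiv.Perm (Fin j.1) :=
  (Pi.evalMonoidHom (fun _ : Fin (a j.1) => Equiv.Perm (Fin j.1)) j.2).comp
    (Pi.evalMonoidHom (fun k => Π _i : Fin (a k), Equiv.Perm (Fin k)) j.1)

theorem towerProj_towerEmb_self (a : ℕ → ℕ) (j : Σ k : ℕ, Fin (a k)) (s : Equiv.Perm (Fin j.1)) :
    towerProj a j (towerEmb a j s) = s := by
  simp [towerProj, towerEmb]

theorem towerProj_towerEmb_of_ne (a : ℕ → ℕ) {j l : Σ k : ℕ, Fin (a k)} (h : l ≠ j)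
    (s : Equiv.Perm (Fin j.1)) : towerProj a l (towerEmb a j s) = 1 := by
  obtain ⟨k, i⟩ := j
  obtain ⟨k', i'⟩ := l
  rcases eq_or_ne k' k with rfl | hk
  · have hi : i' ≠ i := fun hi => h (by rw [hi])
    simp [towerProj, towerEmb, hi]
  · simp [towerProj, towerEmb, hk]

/-- A subgroup contains `g` as soon as it contains each of the components of `g`. -/
theorem mem_of_towerEmb_mem (a : ℕ → ℕ) (ha_fin : {k : ℕ | a k ≠ 0}.Finite)
    (H : Subgroup (Π k : ℕ, Π _i : Fin (a k), Equiv.Perm (Fin k)))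
    (g : Π k : ℕ, Π _i : Fin (a k), Equiv.Perm (Fin k))
    (h : ∀ j : Σ k : ℕ, Fin (a k), towerEmb a j (towerProj a j g) ∈ H) : g ∈ H := by
  refine Submonoid.pi_mem_of_mulSingle_mem_aux (H := H.toSubmonoid) ha_fin.toFinset g (fun k hk => ?_) fun k _ => ?_
  -- Outside the support of `a` the block of coordinates is empty.
  · have : a k = 0 := by simpa using hk
    have : IsEmpty (Fin (a k)) := by rw [this]; infer_instance
    exact Subsingleton.elim _ _
  · exact Subgroup.pi_mem_of_mulSingle_mem (H := H.comap
      (MonoidHom.mulSingle (fun k => Π _i : Fin (a k), Equiv.Perm (Fin k)) k)) (g k)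
      fun i => h ⟨k, i⟩

/-- **Complemented elements are sub-products.** In a tower group, every normal
subgroup admitting a (normal) lattice complement is a full sub-product of the
individual factors `F_j`. -/
theorem complemented_normal_subgroup_is_subproduct
    (a : ℕ → ℕ) (ha_fin : {k : ℕ | a k ≠ 0}.Finite)
    (ha_lt : ∀ k < 3, a k = 0)
    (N : Subgroup (Π k : ℕ, Π _i : Fin (a k), Equiv.Perm (Fin k)))
    (hN : N.Normal)
    (hC : ∃ C : Subgroup (Π k : ℕ, Π _i : Fin (a k), Equiv.Perm (Fin k)),
      C.Normal ∧ N ⊓ C = ⊥ ∧ N ⊔ C = ⊤) :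
    ∃ T : Set (Σ k : ℕ, Fin (a k)), N = ⨆ j ∈ T, towerFactor a j := by
  obtain ⟨C, hCn, hinf, hsup⟩ := hC
  have hcomm : ∀ n ∈ N, ∀ c ∈ C, Commute n c := fun n hn c hc =>
    Subgroup.commute_of_normal_of_disjoint N C hN hCn (disjoint_iff.mpr hinf) n c hn hc
  have hdec : ∀ g, ∃ n ∈ N, ∃ c ∈ C, n * c = g := fun g =>
    Subgroup.mem_sup_of_normal_right.mp (hsup ▸ Subgroup.mem_top g)
  have hsurj : ∀ j, Function.Surjective (towerProj a j) := fun j s =>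
    ⟨_, towerProj_towerEmb_self a j s⟩
  have hdich : ∀ j, N.map (towerProj a j) = ⊥ ∨ C.map (towerProj a j) = ⊥ := by
    intro j
    have hj : 3 ≤ j.1 := by
      by_contra! hlt
      exact (Fin.cast (ha_lt j.1 hlt) j.2).elim0
    refine eq_bot_or_eq_bot_of_commuting_normal (hN.map _ (hsurj j)) (hCn.map _ (hsurj j))
      ?_ ?_ (x := ⟨0, by omega⟩) (y := ⟨1, by omega⟩) (w := ⟨2, by omega⟩)
      (by simp) (by simp) (by simp)
    · rintro _ ⟨n, hn, rfl⟩ _ ⟨c, hc, rfl⟩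
      exact (hcomm n hn c hc).map _
    · intro t
      obtain ⟨g, rfl⟩ := hsurj j t
      obtain ⟨n, hn, c, hc, rfl⟩ := hdec g
      exact ⟨_, ⟨n, hn, rfl⟩, _, ⟨c, hc, rfl⟩, (map_mul _ _ _).symm⟩
  have hbot : ∀ (H : Subgroup (Π k : ℕ, Π _i : Fin (a k), Equiv.Perm (Fin k))) (j),
      H.map (towerProj a j) = ⊥ → ∀ h ∈ H, towerProj a j h = 1 := fun H j hH h hh =>
    Subgroup.mem_bot.mp (hH ▸ Subgroup.mem_map_of_mem _ hh)
  refine ⟨{j | C.map (towerProj a j) = ⊥}, le_antisymm (fun g hg => ?_) ?_⟩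
  · refine mem_of_towerEmb_mem a ha_fin _ g fun j => ?_
    rcases hdich j with h | h
    · rw [hbot N j h g hg, map_one]
      exact one_mem _
    · exact le_iSup₂ (f := fun j _ => towerFactor a j) j h ⟨_, rfl⟩
  · refine iSup₂_le fun j hj => ?_
    rintro _ ⟨s, rfl⟩
    obtain ⟨n, hn, c, hc, hnc⟩ := hdec (towerEmb a j s)
    have hc1 : c = 1 := by
      have hl : ∀ l, towerProj a l c = 1 := by
        intro l
        rcases hdich l with h | h
        · rcases eq_or_ne l j with rfl | hlj
          · exact hbot C l hj c hc
          · have h1 := congrArg (towerProj a l) hnc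
            rwa [map_mul, hbot N l h n hn, one_mul, towerProj_towerEmb_of_ne a hlj] at h1
        · exact hbot C l h c hc
      funext k i
      exact hl ⟨k, i⟩
    rw [← hnc, hc1, mul_one]
    exact hn
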